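/- arXiv:0906.3230 — 3 statements merged into one kernel-verified Lean document; each statement's English description precedes it below -/
import Mathlib

section
/- Limiting absorption principle, convergence of the kernel (Theorem 4.3 i)): let λ be real with λ ≥ a_1 and λ ∉ {a_1,…,a_n}. Then for all network points (j,x) and (k,x'), K((j,x),(k,x'),λ − iα) converges, as α → 0⁺, to K((j,x),(k,x'),λ), where K(·,·,λ) is defined by the same formulas using the real-λ quantities ξ_k(λ), s_j(λ), w(λ), F_λ^{−,j}. -/
noncomputable section

/-- `ξ_k(λ)`: for real `λ`, `ξ_k(λ) = √((λ−a_k)/c_k)` if `λ ≥ a_k` and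
`ξ_k(λ) = −i·√((a_k−λ)/c_k)` if `λ < a_k`. -/
def xiR {m : ℕ} (a c : Fin (m + 2) → ℝ) (lam : ℝ) (k : Fin (m + 2)) : ℂ :=
  if a k ≤ lam then (Real.sqrt ((lam - a k) / c k) : ℂ)
  else -Complex.I * (Real.sqrt ((a k - lam) / c k) : ℂ)

/-- The Wronskian `w(λ) = −i·Σ_k c_k·ξ_k(λ)`. -/
def wR {m : ℕ} (a c : Fin (m + 2) → ℝ) (lam : ℝ) : ℂ :=
  -Complex.I * ∑ k, (c k : ℂ) * xiR a c lam k

/-- `s_j(λ) = −(Σ_{l≠j} c_l·ξ_l(λ))/(c_j·ξ_j(λ))`. -/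
def sR {m : ℕ} (a c : Fin (m + 2) → ℝ) (lam : ℝ) (j : Fin (m + 2)) : ℂ :=
  -(∑ l ∈ Finset.univ.erase j, (c l : ℂ) * xiR a c lam l) / ((c j : ℂ) * xiR a c lam j)

/-- `FR a c lam j k x` is the `k`-th component `F_{λ,k}^{−,j}(x)` of the generalized
eigenfunction `F_λ^{−,j}`. -/
def FR {m : ℕ} (a c : Fin (m + 2) → ℝ) (lam : ℝ) (j k : Fin (m + 2)) (x : ℝ) : ℂ :=
  if k = j then
    Complex.cos (xiR a c lam j * x) -
      Complex.I * sR a c lam j * Complex.sin (xiR a c lam j * x)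
  else Complex.exp (-Complex.I * xiR a c lam k * x)

/-- `ξ_k(μ) = √((μ−a_k)/c_k)` for complex `μ`, with the principal square root
(argument in `(−π, π]`). -/
def xiC {m : ℕ} (a c : Fin (m + 2) → ℝ) (μ : ℂ) (k : Fin (m + 2)) : ℂ :=
  ((μ - (a k : ℂ)) / (c k : ℂ)) ^ ((1 : ℂ) / 2)

/-- The Wronskian `w(μ) = −i·Σ_k c_k·ξ_k(μ)` (the `−` branch, for `Im μ < 0`). -/
def wC {m : ℕ} (a c : Fin (m + 2) → ℝ) (μ : ℂ) : ℂ :=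
  -Complex.I * ∑ k, (c k : ℂ) * xiC a c μ k

/-- `s_j(μ) = −(Σ_{l≠j} c_l·ξ_l(μ))/(c_j·ξ_j(μ))`. -/
def sC {m : ℕ} (a c : Fin (m + 2) → ℝ) (μ : ℂ) (j : Fin (m + 2)) : ℂ :=
  -(∑ l ∈ Finset.univ.erase j, (c l : ℂ) * xiC a c μ l) / ((c j : ℂ) * xiC a c μ j)

/-- `FC a c μ j k x` is the `k`-th component `F_{μ,k}^{−,j}(x)` of the generalized
eigenfunction `F_μ^{−,j}` (the `−` branch, for `Im μ < 0`). -/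
def FC {m : ℕ} (a c : Fin (m + 2) → ℝ) (μ : ℂ) (j k : Fin (m + 2)) (x : ℝ) : ℂ :=
  if k = j then
    Complex.cos (xiC a c μ j * x) - Complex.I * sC a c μ j * Complex.sin (xiC a c μ j * x)
  else Complex.exp (-Complex.I * xiC a c μ k * x)

/-- The resolvent kernel `K((j,x),(k,x'),μ)` for `Im μ < 0` (the `−` branch):
`(1/w(μ))·F_{μ,j}^{−,j}(x)·F_{μ,j}^{−,j+1}(x')` if `k = j` and `x' > x`, and
`(1/w(μ))·F_{μ,j}^{−,j+1}(x)·F_{μ,k}^{−,j}(x')` otherwise; indices modulo `n`. -/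
def KC {m : ℕ} (a c : Fin (m + 2) → ℝ) (μ : ℂ) (j : Fin (m + 2)) (x : ℝ)
    (k : Fin (m + 2)) (x' : ℝ) : ℂ :=
  if k = j ∧ x < x' then (1 / wC a c μ) * FC a c μ j j x * FC a c μ (j + 1) j x'
  else (1 / wC a c μ) * FC a c μ (j + 1) j x * FC a c μ j k x'


/-- The resolvent kernel at real `λ`, formed with the real-`λ` quantities
`ξ_k(λ)`, `s_j(λ)`, `w(λ)`, `F_λ^{−,j}`. -/
def KR {m : ℕ} (a c : Fin (m + 2) → ℝ) (lam : ℝ) (j : Fin (m + 2)) (x : ℝ)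
    (k : Fin (m + 2)) (x' : ℝ) : ℂ :=
  if k = j ∧ x < x' then (1 / wR a c lam) * FR a c lam j j x * FR a c lam (j + 1) j x'
  else (1 / wR a c lam) * FR a c lam (j + 1) j x * FR a c lam j k x'

end

open Filter Topology in
lemma xiC_tendsto {m : ℕ} (a c : Fin (m + 2) → ℝ) (hc : ∀ k, 0 < c k)
    (lam : ℝ) (hlam : ∀ k, lam ≠ a k) (k : Fin (m + 2)) :
    Tendsto (fun α : ℝ => xiC a c ((lam : ℂ) - (α : ℂ) * Complex.I) k)
      (𝓝[>] 0) (𝓝 (xiR a c lam k)) := by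
  have hck := hc k
  have hck' : (c k : ℂ) ≠ 0 := by exact_mod_cast hck.ne'
  have hz : ∀ α : ℝ, (((lam : ℂ) - (α : ℂ) * Complex.I) - (a k : ℂ)) / (c k : ℂ)
      = (((lam - a k) / c k : ℝ) : ℂ) + ((-α / c k : ℝ) : ℂ) * Complex.I := by
    intro α
    push_cast
    field_simp
    ring
  have hcont : Tendsto (fun α : ℝ => (((lam - a k) / c k : ℝ) : ℂ)
      + ((-α / c k : ℝ) : ℂ) * Complex.I) (𝓝[>] 0) (𝓝 (((lam - a k) / c k : ℝ) : ℂ)) := by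
    have h : Continuous (fun α : ℝ => (((lam - a k) / c k : ℝ) : ℂ)
      + ((-α / c k : ℝ) : ℂ) * Complex.I) := by fun_prop
    have h2 := (h.tendsto 0).mono_left (nhdsWithin_le_nhds (s := Set.Ioi (0 : ℝ)))
    simpa using h2
  unfold xiC xiR
  simp only [hz]
  rcases lt_or_gt_of_ne (hlam k) with h | h
  · rw [if_neg (not_le.mpr h)]
    have hneg : (lam - a k) / c k < 0 := div_neg_of_neg_of_pos (by linarith) hck
    have hpos : 0 < (a k - lam) / c k := div_pos (by linarith) hck
    have hw : Tendsto (fun α : ℝ => (((lam - a k) / c k : ℝ) : ℂ)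
      + ((-α / c k : ℝ) : ℂ) * Complex.I) (𝓝[>] 0)
        (𝓝[{z : ℂ | z.im < 0}] (((lam - a k) / c k : ℝ) : ℂ)) := by
      refine tendsto_nhdsWithin_iff.mpr ⟨hcont, ?_⟩
      filter_upwards [self_mem_nhdsWithin] with α hα
      have hα' : 0 < α := hα
      have : -α / c k < 0 := div_neg_of_neg_of_pos (by linarith) hck
      simpa [-Complex.ofReal_div] using this
    have hl := (Complex.tendsto_log_nhdsWithin_im_neg_of_re_neg_of_im_zero
      (z := (((lam - a k) / c k : ℝ) : ℂ)) (by rw [Complex.ofReal_re]; exact hneg)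
      (Complex.ofReal_im _)).comp hw
    have he := (Complex.continuous_exp.tendsto _).comp (hl.mul_const ((1 : ℂ) / 2))
    have hval : Complex.exp ((((Real.log ‖(((lam - a k) / c k : ℝ) : ℂ)‖ : ℝ) : ℂ)
        - Real.pi * Complex.I) * ((1 : ℂ) / 2))
        = -Complex.I * (Real.sqrt ((a k - lam) / c k) : ℂ) := by
      have hn : ‖(((lam - a k) / c k : ℝ) : ℂ)‖ = (a k - lam) / c k := by
        rw [Complex.norm_real, Real.norm_eq_abs, abs_of_neg hneg]
        ring
      rw [hn]
      have e1 : (((Real.log ((a k - lam) / c k) : ℝ) : ℂ) - Real.pi * Complex.I) * ((1 : ℂ) / 2)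
          = (-(Real.pi / 2 * Complex.I)) + ((Real.log ((a k - lam) / c k) * (1 / 2) : ℝ) : ℂ) := by
        push_cast
        ring
      rw [e1, Complex.exp_add, Complex.exp_neg, Complex.exp_pi_div_two_mul_I, Complex.inv_I,
        ← Complex.ofReal_exp, Real.sqrt_eq_rpow, Real.rpow_def_of_pos hpos]
    rw [← hval]
    refine he.congr' ?_
    filter_upwards [self_mem_nhdsWithin] with α hα
    have hα' : 0 < α := hα
    have h3 : -α / c k < 0 := div_neg_of_neg_of_pos (by linarith) hck
    have hne : (((lam - a k) / c k : ℝ) : ℂ) + ((-α / c k : ℝ) : ℂ) * Complex.I ≠ 0 := by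
      intro h0
      have := congrArg Complex.im h0
      simp [-Complex.ofReal_div] at this
      rcases this with h4 | h4 <;> linarith
    rw [Complex.cpow_def_of_ne_zero hne]
    rfl
  · rw [if_pos h.le]
    have hpos : 0 < (lam - a k) / c k := div_pos (by linarith) hck
    have hval : (Real.sqrt ((lam - a k) / c k) : ℂ)
        = (((lam - a k) / c k : ℝ) : ℂ) ^ ((1 : ℂ) / 2) := by
      rw [Real.sqrt_eq_rpow, Complex.ofReal_cpow hpos.le]
      norm_num
    rw [hval]
    have hsp : (((lam - a k) / c k : ℝ) : ℂ) ∈ Complex.slitPlane :=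
      Complex.ofReal_mem_slitPlane.mpr hpos
    exact (continuousAt_cpow_const hsp).tendsto.comp hcont

lemma xiR_ne_zero {m : ℕ} (a c : Fin (m + 2) → ℝ) (hc : ∀ k, 0 < c k)
    (lam : ℝ) (hlam : ∀ k, lam ≠ a k) (k : Fin (m + 2)) : xiR a c lam k ≠ 0 := by
  unfold xiR
  rcases lt_or_gt_of_ne (hlam k) with h | h
  · rw [if_neg (not_le.mpr h)]
    have hpos : 0 < (a k - lam) / c k := div_pos (by linarith) (hc k)
    have := (Real.sqrt_pos.mpr hpos).ne'
    exact mul_ne_zero (neg_ne_zero.mpr Complex.I_ne_zero) (by exact_mod_cast this)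
  · rw [if_pos h.le]
    have hpos : 0 < (lam - a k) / c k := div_pos (by linarith) (hc k)
    have := (Real.sqrt_pos.mpr hpos).ne'
    exact_mod_cast this

lemma wR_ne_zero {m : ℕ} (a c : Fin (m + 2) → ℝ) (hc : ∀ k, 0 < c k)
    (lam : ℝ) (hlam1 : a 0 ≤ lam) (hlam : ∀ k, lam ≠ a k) : wR a c lam ≠ 0 := by
  unfold wR
  refine mul_ne_zero (neg_ne_zero.mpr Complex.I_ne_zero) ?_
  intro h0
  have h1 := congrArg Complex.re h0
  rw [Complex.re_sum, Complex.zero_re] at h1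
  have hnn : ∀ k ∈ Finset.univ, 0 ≤ ((c k : ℂ) * xiR a c lam k).re := by
    intro k _
    rw [Complex.re_ofReal_mul]
    refine mul_nonneg (hc k).le ?_
    unfold xiR
    split_ifs
    · rw [Complex.ofReal_re]; exact Real.sqrt_nonneg _
    · simp
  have h2 := (Finset.sum_eq_zero_iff_of_nonneg hnn).mp h1 0 (Finset.mem_univ _)
  rw [Complex.re_ofReal_mul] at h2
  have h3 : 0 < (lam - a 0) / c 0 :=
    div_pos (sub_pos.mpr (lt_of_le_of_ne hlam1 (hlam 0).symm)) (hc 0)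
  unfold xiR at h2
  rw [if_pos hlam1, Complex.ofReal_re] at h2
  exact (mul_pos (hc 0) (Real.sqrt_pos.mpr h3)).ne' h2

open Filter Topology in
lemma FC_tendsto {m : ℕ} (a c : Fin (m + 2) → ℝ) (hc : ∀ k, 0 < c k)
    (lam : ℝ) (hlam : ∀ k, lam ≠ a k) (j k : Fin (m + 2)) (x : ℝ) :
    Tendsto (fun α : ℝ => FC a c ((lam : ℂ) - (α : ℂ) * Complex.I) j k x)
      (𝓝[>] 0) (𝓝 (FR a c lam j k x)) := by
  have hxi := xiC_tendsto a c hc lam hlam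
  unfold FC FR
  split_ifs
  · have hs : Tendsto (fun α : ℝ => sC a c ((lam : ℂ) - (α : ℂ) * Complex.I) j)
        (𝓝[>] 0) (𝓝 (sR a c lam j)) := by
      unfold sC sR
      refine Tendsto.div (Tendsto.neg (tendsto_finsetSum _ fun l _ => (hxi l).const_mul _))
        ((hxi j).const_mul _) ?_
      exact mul_ne_zero (by exact_mod_cast (hc j).ne') (xiR_ne_zero a c hc lam hlam j)
    exact ((Complex.continuous_cos.tendsto _).comp ((hxi j).mul_const _)).sub
      ((hs.const_mul _).mul ((Complex.continuous_sin.tendsto _).comp ((hxi j).mul_const _)))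
  · exact (Complex.continuous_exp.tendsto _).comp (((hxi k).const_mul _).mul_const _)

/-- STATEMENT 9 (Theorem 4.3 i), limiting absorption principle, convergence of the kernel):
for real `λ ≥ a_1` with `λ ∉ {a_1,…,a_n}` and all network points `(j,x)`, `(k,x')`,
`K((j,x),(k,x'),λ−iα) → K((j,x),(k,x'),λ)` as `α → 0⁺`. -/
theorem statement9 (m : ℕ) (a c : Fin (m + 2) → ℝ) (ha : Monotone a) (hc : ∀ k, 0 < c k)
    (lam : ℝ) (hlam1 : a 0 ≤ lam) (hlam : ∀ k, lam ≠ a k)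
    (j k : Fin (m + 2)) (x x' : ℝ) (hx : 0 ≤ x) (hx' : 0 ≤ x') :
    Filter.Tendsto (fun α : ℝ => KC a c ((lam : ℂ) - (α : ℂ) * Complex.I) j x k x')
      (nhdsWithin 0 (Set.Ioi 0)) (nhds (KR a c lam j x k x')) := by
  have hF := FC_tendsto a c hc lam hlam
  have hw : Filter.Tendsto (fun α : ℝ => 1 / wC a c ((lam : ℂ) - (α : ℂ) * Complex.I))
      (nhdsWithin 0 (Set.Ioi 0)) (nhds (1 / wR a c lam)) := by
    refine Filter.Tendsto.div tendsto_const_nhds ?_ (wR_ne_zero a c hc lam hlam1 hlam)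
    unfold wC wR
    exact (tendsto_finsetSum _ fun l _ =>
      (xiC_tendsto a c hc lam hlam l).const_mul _).const_mul _
  unfold KC KR
  split_ifs
  · exact (hw.mul (hF _ _ _)).mul (hF _ _ _)
  · exact (hw.mul (hF _ _ _)).mul (hF _ _ _)
end

section
/- Conjugation symmetry of the kernel (Lemma 4.4): for every μ ∈ ℂ with Im μ < 0 and all network points (j,x), (k,x'), one has K((j,x),(k,x'), conj(μ)) = conj( K((j,x),(k,x'), μ) ), where the kernel at conj(μ) (which has positive imaginary part) is formed with the '+' quantities F^{+,·} and w⁺, and the kernel at μ with the '−' quantities. -/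
noncomputable section

/-- The `+`-Wronskian `w⁺(μ) = +i·Σ_k c_k·ξ_k(μ)` (for `Im μ > 0`). -/
def wCp {m : ℕ} (a c : Fin (m + 2) → ℝ) (μ : ℂ) : ℂ :=
  Complex.I * ∑ k, (c k : ℂ) * xiC a c μ k

/-- `FCp a c μ j k x` is the `k`-th component `F_{μ,k}^{+,j}(x)` of the generalized
eigenfunction `F_μ^{+,j}` (the `+` branch, for `Im μ > 0`). -/
def FCp {m : ℕ} (a c : Fin (m + 2) → ℝ) (μ : ℂ) (j k : Fin (m + 2)) (x : ℝ) : ℂ :=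
  if k = j then
    Complex.cos (xiC a c μ j * x) + Complex.I * sC a c μ j * Complex.sin (xiC a c μ j * x)
  else Complex.exp (Complex.I * xiC a c μ k * x)

/-- The resolvent kernel `K((j,x),(k,x'),μ)` for `Im μ > 0`, formed with the `+` quantities. -/
def KCp {m : ℕ} (a c : Fin (m + 2) → ℝ) (μ : ℂ) (j : Fin (m + 2)) (x : ℝ)
    (k : Fin (m + 2)) (x' : ℝ) : ℂ :=
  if k = j ∧ x < x' then (1 / wCp a c μ) * FCp a c μ j j x * FCp a c μ (j + 1) j x'
  else (1 / wCp a c μ) * FCp a c μ (j + 1) j x * FCp a c μ j k x'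

end

theorem aux_xiC_conj {m : ℕ} (a c : Fin (m + 2) → ℝ) (hc : ∀ k, 0 < c k)
    (μ : ℂ) (hμ : μ.im < 0) (k : Fin (m + 2)) :
    xiC a c ((starRingEnd ℂ) μ) k = (starRingEnd ℂ) (xiC a c μ k) := by
  unfold xiC
  have him : ((μ - (a k : ℂ)) / (c k : ℂ)).im ≠ 0 := by
    rw [Complex.div_ofReal_im]
    simp only [Complex.sub_im, Complex.ofReal_im, sub_zero]
    exact div_ne_zero hμ.ne (hc k).ne'
  have harg : ((μ - (a k : ℂ)) / (c k : ℂ)).arg ≠ Real.pi := by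
    intro h
    exact him (Complex.arg_eq_pi_iff.1 h).2
  have h := Complex.conj_cpow _ ((1 : ℂ) / 2) harg
  have h2 : (starRingEnd ℂ) 2 = 2 := Complex.conj_ofNat 2
  simpa [h2] using h

theorem aux_wC_conj {m : ℕ} (a c : Fin (m + 2) → ℝ) (hc : ∀ k, 0 < c k)
    (μ : ℂ) (hμ : μ.im < 0) :
    wCp a c ((starRingEnd ℂ) μ) = (starRingEnd ℂ) (wC a c μ) := by
  simp [wCp, wC, aux_xiC_conj a c hc μ hμ, map_sum]

theorem aux_sC_conj {m : ℕ} (a c : Fin (m + 2) → ℝ) (hc : ∀ k, 0 < c k)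
    (μ : ℂ) (hμ : μ.im < 0) (j : Fin (m + 2)) :
    sC a c ((starRingEnd ℂ) μ) j = (starRingEnd ℂ) (sC a c μ j) := by
  simp only [sC, aux_xiC_conj a c hc μ hμ, map_sum, map_div₀, map_neg, map_mul,
    Complex.conj_ofReal]

theorem aux_FC_conj {m : ℕ} (a c : Fin (m + 2) → ℝ) (hc : ∀ k, 0 < c k)
    (μ : ℂ) (hμ : μ.im < 0) (j k : Fin (m + 2)) (x : ℝ) :
    FCp a c ((starRingEnd ℂ) μ) j k x = (starRingEnd ℂ) (FC a c μ j k x) := by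
  unfold FCp FC
  split_ifs
  · simp only [aux_xiC_conj a c hc μ hμ, aux_sC_conj a c hc μ hμ, map_sub, map_mul,
      Complex.conj_I, ← Complex.cos_conj, ← Complex.sin_conj, Complex.conj_ofReal]
    ring
  · simp only [aux_xiC_conj a c hc μ hμ, map_mul, map_neg, neg_neg,
      Complex.conj_I, ← Complex.exp_conj, Complex.conj_ofReal]

/-- Lemma 4.4, conjugation symmetry of the kernel: for every `μ ∈ ℂ` with
`Im μ < 0` and all network points `(j,x)`, `(k,x')`,
`K((j,x),(k,x'),conj μ) = conj(K((j,x),(k,x'),μ))`, where the kernel at `conj μ` (which has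
positive imaginary part) is formed with the `+` quantities and the kernel at `μ` with the `−`
quantities. -/
theorem statement10 (m : ℕ) (a c : Fin (m + 2) → ℝ) (ha : Monotone a) (hc : ∀ k, 0 < c k)
    (μ : ℂ) (hμ : μ.im < 0)
    (j k : Fin (m + 2)) (x x' : ℝ) (hx : 0 ≤ x) (hx' : 0 ≤ x') :
    KCp a c ((starRingEnd ℂ) μ) j x k x' = (starRingEnd ℂ) (KC a c μ j x k x') := by
  unfold KCp KC
  split_ifs
  · simp only [aux_FC_conj a c hc μ hμ, aux_wC_conj a c hc μ hμ, map_mul, map_div₀, map_one]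
  · simp only [aux_FC_conj a c hc μ hμ, aux_wC_conj a c hc μ hμ, map_mul, map_div₀, map_one]
end

section
/- Explicit form of the spectral density integrand (Lemma 4.6): let p ∈ {1,…,n}, let λ ∈ (a_p, a_{p+1}), let j, k ∈ {1,…,n} and x, x' ≥ 0, and set G := Im( (1/w(λ)) · F_{λ,j}^{−,j+1}(x) · F_{λ,k}^{−,j}(x') ). Then: (a) if j > p and k > p, G = Im(1/w(λ))·exp(−ξ'_j(λ)x − ξ'_k(λ)x'); (b) if j ≠ k and j, k ≤ p, G = Im(1/w(λ))·(cos(ξ_j(λ)x)cos(ξ_k(λ)x') − sin(ξ_j(λ)x)sin(ξ_k(λ)x')) − Re(1/w(λ))·(cos(ξ_j(λ)x)sin(ξ_k(λ)x') + sin(ξ_j(λ)x)cos(ξ_k(λ)x')); (b') if j = k ≤ p, G = Im(1/w(λ))·cos(ξ_j(λ)x)cos(ξ_j(λ)x') − Im(s_j(λ)/w(λ))·sin(ξ_j(λ)x)sin(ξ_j(λ)x') − Re(s_j(λ)/w(λ))·cos(ξ_j(λ)x)sin(ξ_j(λ)x') − Re(1/w(λ))·sin(ξ_j(λ)x)cos(ξ_j(λ)x');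 (c) if j ≤ p < k, G = exp(−ξ'_k(λ)x')·( Im(1/w(λ))·cos(ξ_j(λ)x) − Re(1/w(λ))·sin(ξ_j(λ)x) ); (d) if k ≤ p < j, G = exp(−ξ'_j(λ)x)·( Im(1/w(λ))·cos(ξ_k(λ)x') − Re(1/w(λ))·sin(ξ_k(λ)x') ). -/
lemma exp_real_aux (y x : ℝ) : Complex.exp (-Complex.I * (y : ℂ) * (x : ℂ)) =
    (Real.cos (y * x) : ℂ) - Complex.I * (Real.sin (y * x) : ℂ) := by
  have : -Complex.I * (y : ℂ) * (x : ℂ) = (-((y * x : ℝ) : ℂ)) * Complex.I := by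
    push_cast; ring
  rw [this, Complex.exp_mul_I, Complex.cos_neg, Complex.sin_neg]
  push_cast; ring

lemma exp_imag_aux (y x : ℝ) :
    Complex.exp (-Complex.I * (-Complex.I * (y : ℂ)) * (x : ℂ)) = (Real.exp (-y * x) : ℂ) := by
  push_cast
  congr 1
  linear_combination (y * x : ℂ) * Complex.I_mul_I

lemma diag_aux {m : ℕ} (a c : Fin (m + 2) → ℝ) (hc : ∀ k, 0 < c k) (lam : ℝ)
    (j : Fin (m + 2)) (h : lam < a j) (x : ℝ) :
    ∃ r : ℝ, (1 / wR a c lam) * FR a c lam j j x =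
      (1 / wR a c lam) * (Real.exp (-(Real.sqrt ((a j - lam) / c j)) * x) : ℂ) + (r : ℂ) := by
  by_cases hw : wR a c lam = 0
  · exact ⟨0, by simp [hw]⟩
  have hy : 0 < Real.sqrt ((a j - lam) / c j) :=
    Real.sqrt_pos.2 (div_pos (sub_pos.2 h) (hc j))
  have hxi : xiR a c lam j = -Complex.I * (Real.sqrt ((a j - lam) / c j) : ℂ) := by
    simp [xiR, not_le.2 h]
  set y := Real.sqrt ((a j - lam) / c j) with hydef
  have hy0 : (y : ℂ) ≠ 0 := by exact_mod_cast hy.ne'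
  have hc0 : (c j : ℂ) ≠ 0 := by exact_mod_cast (hc j).ne'
  have hs : (1 - sR a c lam j) * ((c j : ℂ) * y) = - wR a c lam := by
    unfold sR wR
    rw [← Finset.add_sum_erase _ _ (Finset.mem_univ j), hxi]
    field_simp
    ring_nf
    simp only [Complex.I_sq, Complex.I_pow_three]
    ring
  have hs' : sR a c lam j = 1 + wR a c lam / ((c j : ℂ) * y) := by
    field_simp
    linear_combination -hs
  refine ⟨-(Real.sinh (y * x) / (c j * y)), ?_⟩
  have e1 : -Complex.I * (y : ℂ) * (x : ℂ) = (-((y * x : ℝ) : ℂ)) * Complex.I := by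
    push_cast; ring
  have e2 : (Real.exp (-y * x) : ℂ) = (Real.cosh (y * x) : ℂ) - (Real.sinh (y * x) : ℂ) := by
    rw [← Complex.ofReal_sub, Real.cosh_sub_sinh]; ring_nf
  rw [e2]
  simp only [FR, if_true, hxi]
  rw [e1, Complex.cos_mul_I, Complex.sin_mul_I, Complex.cosh_neg, Complex.sinh_neg, hs']
  push_cast
  generalize Complex.sinh (y * x) = S
  generalize Complex.cosh (y * x) = C
  field_simp
  ring_nf
  simp only [Complex.I_sq]
  ring

/-- Lemma 4.6, explicit form of the spectral density integrand: let
`λ ∈ (a_p, a_{p+1})` (with `a_{n+1} = +∞`, encoded by `a p < λ` and `λ < a k` for all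
`k > p`), let `j, k` be branch indices and `x, x' ≥ 0`, and set
`G = Im((1/w(λ))·F_{λ,j}^{−,j+1}(x)·F_{λ,k}^{−,j}(x'))`. Then `G` is given by the
explicit case formulas (a), (b), (b'), (c), (d), where `ξ_k(λ) = √((λ−a_k)/c_k)` is real
for `k ≤ p` and `ξ'_k(λ) = √((a_k−λ)/c_k)` for `k > p`. -/
theorem statement11 (m : ℕ) (a c : Fin (m + 2) → ℝ) (ha : Monotone a) (hc : ∀ k, 0 < c k)
    (p : Fin (m + 2)) (lam : ℝ) (hp1 : a p < lam) (hp2 : ∀ k, p < k → lam < a k)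
    (j k : Fin (m + 2)) (x x' : ℝ) (hx : 0 ≤ x) (hx' : 0 ≤ x') :
    -- case (a): `j > p` and `k > p`
    (p < j → p < k →
      ((1 / wR a c lam) * FR a c lam (j + 1) j x * FR a c lam j k x').im =
        (1 / wR a c lam).im *
          Real.exp (-(Real.sqrt ((a j - lam) / c j)) * x - Real.sqrt ((a k - lam) / c k) * x')) ∧
    -- case (b): `j ≠ k`, `j ≤ p`, `k ≤ p`
    (j ≠ k → j ≤ p → k ≤ p →
      ((1 / wR a c lam) * FR a c lam (j + 1) j x * FR a c lam j k x').im =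
        (1 / wR a c lam).im *
            (Real.cos (Real.sqrt ((lam - a j) / c j) * x) *
                Real.cos (Real.sqrt ((lam - a k) / c k) * x') -
              Real.sin (Real.sqrt ((lam - a j) / c j) * x) *
                Real.sin (Real.sqrt ((lam - a k) / c k) * x')) -
          (1 / wR a c lam).re *
            (Real.cos (Real.sqrt ((lam - a j) / c j) * x) *
                Real.sin (Real.sqrt ((lam - a k) / c k) * x') +
              Real.sin (Real.sqrt ((lam - a j) / c j) * x) *
                Real.cos (Real.sqrt ((lam - a k) / c k) * x'))) ∧
    -- case (b'): `j = k ≤ p`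
    (j = k → j ≤ p →
      ((1 / wR a c lam) * FR a c lam (j + 1) j x * FR a c lam j k x').im =
        (1 / wR a c lam).im *
            (Real.cos (Real.sqrt ((lam - a j) / c j) * x) *
              Real.cos (Real.sqrt ((lam - a j) / c j) * x')) -
          (sR a c lam j / wR a c lam).im *
            (Real.sin (Real.sqrt ((lam - a j) / c j) * x) *
              Real.sin (Real.sqrt ((lam - a j) / c j) * x')) -
          (sR a c lam j / wR a c lam).re *
            (Real.cos (Real.sqrt ((lam - a j) / c j) * x) *
              Real.sin (Real.sqrt ((lam - a j) / c j) * x')) -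
          (1 / wR a c lam).re *
            (Real.sin (Real.sqrt ((lam - a j) / c j) * x) *
              Real.cos (Real.sqrt ((lam - a j) / c j) * x'))) ∧
    -- case (c): `j ≤ p < k`
    (j ≤ p → p < k →
      ((1 / wR a c lam) * FR a c lam (j + 1) j x * FR a c lam j k x').im =
        Real.exp (-(Real.sqrt ((a k - lam) / c k)) * x') *
          ((1 / wR a c lam).im * Real.cos (Real.sqrt ((lam - a j) / c j) * x) -
            (1 / wR a c lam).re * Real.sin (Real.sqrt ((lam - a j) / c j) * x))) ∧
    -- case (d): `k ≤ p < j`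
    (k ≤ p → p < j →
      ((1 / wR a c lam) * FR a c lam (j + 1) j x * FR a c lam j k x').im =
        Real.exp (-(Real.sqrt ((a j - lam) / c j)) * x) *
          ((1 / wR a c lam).im * Real.cos (Real.sqrt ((lam - a k) / c k) * x') -
            (1 / wR a c lam).re * Real.sin (Real.sqrt ((lam - a k) / c k) * x'))) := by
  have hne : j ≠ j + 1 := by
    intro h
    have : (1 : Fin (m + 2)) = 0 := by
      have h2 : j + 0 = j + 1 := by simpa using h
      exact (add_left_cancel h2).symm
    exact absurd this (by simp)
  have hlo : ∀ l, l ≤ p → xiR a c lam l = (Real.sqrt ((lam - a l) / c l) : ℂ) := by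
    intro l hl
    simp [xiR, (ha hl).trans hp1.le]
  have hhi : ∀ l, p < l → xiR a c lam l = -Complex.I * (Real.sqrt ((a l - lam) / c l) : ℂ) := by
    intro l hl
    simp [xiR, not_le.2 (hp2 l hl)]
  have hF1 : FR a c lam (j + 1) j x = Complex.exp (-Complex.I * xiR a c lam j * x) := by
    simp only [FR, if_neg hne]
  have hF2 : k ≠ j → FR a c lam j k x' = Complex.exp (-Complex.I * xiR a c lam k * x') := by
    intro h
    simp only [FR, if_neg h]
  refine ⟨?_, ?_, ?_, ?_, ?_⟩
  · intro hj hk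
    rw [sub_eq_add_neg, Real.exp_add, ← neg_mul, hF1, hhi j hj, exp_imag_aux]
    by_cases hkj : k = j
    · subst hkj
      obtain ⟨r, hr⟩ := diag_aux a c hc lam k (hp2 k hk) x'
      rw [mul_right_comm, hr, Complex.im_mul_ofReal, Complex.add_im, Complex.im_mul_ofReal,
        Complex.ofReal_im]
      ring
    · rw [hF2 hkj, hhi k hk, exp_imag_aux, Complex.im_mul_ofReal, Complex.im_mul_ofReal]
      ring
  · intro hjk hj hk
    rw [hF1, hF2 hjk.symm, hlo j hj, hlo k hk, exp_real_aux, exp_real_aux]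
    generalize 1 / wR a c lam = W
    simp only [Complex.mul_im, Complex.mul_re, Complex.sub_im, Complex.sub_re, Complex.I_re,
      Complex.I_im, Complex.ofReal_re, Complex.ofReal_im]
    ring
  · intro hjk hj
    subst hjk
    have hF : FR a c lam j j x' = (Real.cos (Real.sqrt ((lam - a j) / c j) * x') : ℂ) -
        Complex.I * sR a c lam j * (Real.sin (Real.sqrt ((lam - a j) / c j) * x') : ℂ) := by
      simp only [FR, if_true, hlo j hj]
      push_cast
      rfl
    rw [hF1, hF, hlo j hj, exp_real_aux, div_eq_mul_one_div (sR a c lam j)]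
    generalize 1 / wR a c lam = W
    simp only [Complex.mul_im, Complex.mul_re, Complex.sub_im, Complex.sub_re, Complex.I_re,
      Complex.I_im, Complex.ofReal_re, Complex.ofReal_im]
    ring
  · intro hj hk
    rw [hF1, hF2 (hj.trans_lt hk).ne', hlo j hj, hhi k hk, exp_real_aux, exp_imag_aux]
    generalize 1 / wR a c lam = W
    simp only [Complex.mul_im, Complex.mul_re, Complex.sub_im, Complex.sub_re, Complex.I_re,
      Complex.I_im, Complex.ofReal_re, Complex.ofReal_im]
    ring
  · intro hk hj
    rw [hF1, hF2 (hk.trans_lt hj).ne, hlo k hk, hhi j hj, exp_real_aux, exp_imag_aux]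
    generalize 1 / wR a c lam = W
    simp only [Complex.mul_im, Complex.mul_re, Complex.sub_im, Complex.sub_re, Complex.I_re,
      Complex.I_im, Complex.ofReal_re, Complex.ofReal_im]
    ring
end
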